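/- Let n ≥ 1 and θ ∈ (0,2]. The function φ_c on ℝ^n defined by φ_c(x) := |x|^{−n} [log(e + 1/|x|)]^{−n/θ−1} for x ≠ 0 belongs to the uniformly local weak Zygmund type space 𝔏_{ul}^{1,∞}(log 𝔏)^{n/θ}, i.e. sup_{z∈ℝ^n} ‖φ_c · χ_{B(z,1)}‖_{𝔏^{1,∞}(log 𝔏)^{n/θ}} < ∞. -/

import Mathlib

open MeasureTheory Real Set ENNReal

noncomputable def logFac (s : ℝ) : ℝ := Real.log (Real.exp 1 + 1 / s)

noncomputable def zygNorm (n : ℕ) (q α : ℝ)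
    (f : EuclideanSpace ℝ (Fin n) → ℝ) : ℝ≥0∞ :=
  ⨆ s : Set.Ioi (0 : ℝ),
    (ENNReal.ofReal (logFac s.1) ^ α *
      ⨆ E : {E : Set (EuclideanSpace ℝ (Fin n)) //
          MeasurableSet E ∧ volume E = ENNReal.ofReal s.1},
        ∫⁻ x in E.1, ENNReal.ofReal (|f x| ^ q)) ^ (1 / q)

noncomputable def zygNormUL (n : ℕ) (q α ρ : ℝ)
    (f : EuclideanSpace ℝ (Fin n) → ℝ) : ℝ≥0∞ :=
  ⨆ z : EuclideanSpace ℝ (Fin n),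
    zygNorm n q α ((Metric.ball z ρ).indicator f)

/-! Write `L = logFac` and `φ(x) = |x|⁻ⁿ L(|x|)^(-α - 1)`. In polar coordinates the integral of `φ`
over the ball `B(0, r)` is a multiple of `∫₀ʳ t⁻¹ L(t)^(-α - 1) dt`. Up to the factor
`α / (e t + 1)`, which for `t ≤ 1` is bounded away from `0`, this integrand is the derivative of
`L(t)^(-α)`, so the integral is `O(L(r)^(-α))` for `r ≤ 1`. Off that ball `φ ≤ r⁻ⁿ`. For a set `A`
of measure `O(s)` with `s ≤ 1`, choose `r` by `r²ⁿ = s`: then `∫_A φ = O(L(r)^(-α) + rⁿ)`, and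
`L(s) ≤ 2n L(r)` since passing to a power costs a logarithm only a constant factor. For `s > 1`
replace `s` by `1`; sets inside a ball of radius `ρ` have bounded measure. -/

open Filter Topology Module

section LogFac

lemma one_le_logFac {s : ℝ} (hs : 0 < s) : 1 ≤ logFac s := by
  have : 0 < 1 / s := by positivity
  rw [logFac, Real.le_log_iff_exp_le (by positivity)]
  linarith

lemma logFac_pos {s : ℝ} (hs : 0 < s) : 0 < logFac s :=
  one_pos.trans_le (one_le_logFac hs)

lemma logFac_nonneg {s : ℝ} (hs : 0 ≤ s) : 0 ≤ logFac s :=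
  Real.log_nonneg <| (Real.one_le_exp zero_le_one).trans <|
    le_add_of_nonneg_right <| one_div_nonneg.2 hs

lemma antitoneOn_logFac : AntitoneOn logFac (Ioi 0) := by
  intro s hs t _ hst
  have hs : 0 < s := hs
  have ht : 0 < t := hs.trans_le hst
  unfold logFac
  gcongr

lemma measurable_logFac : Measurable logFac := by
  unfold logFac
  fun_prop

lemma logFac_pow_le {r : ℝ} (hr : 0 < r) {m : ℕ} (hm : m ≠ 0) :
    logFac (r ^ m) ≤ m * logFac r := by
  have exp_one_le : Real.exp 1 ≤ Real.exp 1 ^ m :=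
    le_self_pow₀ (Real.one_le_exp zero_le_one) hm
  unfold logFac
  rw [← Real.log_pow]
  gcongr
  calc Real.exp 1 + 1 / r ^ m ≤ Real.exp 1 ^ m + (1 / r) ^ m := by rw [one_div_pow]; gcongr
    _ ≤ (Real.exp 1 + 1 / r) ^ m := pow_add_pow_le (by positivity) (by positivity) hm

lemma tendsto_logFac_nhdsGT_zero : Tendsto logFac (𝓝[>] 0) atTop := by
  refine Real.tendsto_log_atTop.comp (tendsto_atTop_add_const_left _ _ ?_)
  exact tendsto_inv_nhdsGT_zero.congr fun x ↦ (one_div x).symm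

lemma hasDerivAt_logFac_rpow_neg (α : ℝ) {t : ℝ} (ht : 0 < t) :
    HasDerivAt (fun t ↦ logFac t ^ (-α))
      (α / (Real.exp 1 * t + 1) * (t⁻¹ * logFac t ^ (-α - 1))) t := by
  have deriv_arg : HasDerivAt (fun t : ℝ ↦ Real.exp 1 + 1 / t) (-(t ^ 2)⁻¹) t := by
    simpa only [one_div] using (hasDerivAt_inv ht.ne').const_add (Real.exp 1)
  have arg_pos : 0 < Real.exp 1 + 1 / t := by positivity
  have deriv_logFac : HasDerivAt logFac (-(t ^ 2)⁻¹ / (Real.exp 1 + 1 / t)) t :=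
    deriv_arg.log arg_pos.ne'
  convert deriv_logFac.rpow_const (p := -α) (Or.inl (logFac_pos ht).ne') using 1
  field_simp

lemma exists_logFac_rpow_mul_rpow_le {a b : ℝ} (ha : 0 < a) (hb : 0 < b) :
    ∃ C : ℝ, ∀ r ∈ Ioc (0 : ℝ) 1, logFac r ^ a * r ^ b ≤ C := by
  refine ⟨(Real.exp 1 + 1) ^ b / (b / a) ^ a, fun r ⟨hr, hr1⟩ ↦ ?_⟩
  have log_le : logFac r ≤ (Real.exp 1 + 1 / r) ^ (b / a) / (b / a) :=
    Real.log_le_rpow_div (by positivity) (by positivity)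
  calc logFac r ^ a * r ^ b
      ≤ ((Real.exp 1 + 1 / r) ^ (b / a) / (b / a)) ^ a * r ^ b := by
        have := logFac_nonneg hr.le
        gcongr
    _ = ((Real.exp 1 + 1 / r) * r) ^ b / (b / a) ^ a := by
        rw [Real.div_rpow (by positivity) (by positivity), ← Real.rpow_mul (by positivity),
          div_mul_cancel₀ b ha.ne', Real.mul_rpow (by positivity) hr.le, div_mul_eq_mul_div]
    _ = (Real.exp 1 * r + 1) ^ b / (b / a) ^ a := by
        rw [add_mul, one_div_mul_cancel hr.ne']
    _ ≤ (Real.exp 1 + 1) ^ b / (b / a) ^ a := by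
        gcongr
        exact mul_le_of_le_one_right (Real.exp_pos 1).le hr1

end LogFac

section FundamentalTheorem

variable {g g' : ℝ → ℝ} {a b la lb : ℝ}

lemma integrableOn_Ioo_deriv_of_nonneg_of_tendsto
    (hderiv : ∀ x ∈ Ioo a b, HasDerivAt g (g' x) x) (hg' : ∀ x ∈ Ioo a b, 0 ≤ g' x)
    (ha : Tendsto g (𝓝[>] a) (𝓝 la)) (hb : Tendsto g (𝓝[<] b) (𝓝 lb)) :
    IntegrableOn g' (Ioo a b) := by
  have g_cont : ContinuousOn g (Ioo a b) := HasDerivAt.continuousOn hderiv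
  have ext_eq : EqOn (extendFrom (Ioo a b) g) g (Ioo a b) := extendFrom_extends g_cont
  refine (intervalIntegral.integrableOn_deriv_of_nonneg
    (continuousOn_Icc_extendFrom_Ioo g_cont ha hb) (fun x hx ↦ ?_) hg').mono_set
    Ioo_subset_Ioc_self
  exact (hderiv x hx).congr_of_eventuallyEq (ext_eq.eventuallyEq_of_mem (Ioo_mem_nhds hx.1 hx.2))

lemma setLIntegral_Ioo_deriv_of_nonneg_of_tendsto (hab : a < b)
    (hderiv : ∀ x ∈ Ioo a b, HasDerivAt g (g' x) x) (hg' : ∀ x ∈ Ioo a b, 0 ≤ g' x)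
    (ha : Tendsto g (𝓝[>] a) (𝓝 la)) (hb : Tendsto g (𝓝[<] b) (𝓝 lb)) :
    ∫⁻ x in Ioo a b, ENNReal.ofReal (g' x) = ENNReal.ofReal (lb - la) := by
  have integrable := integrableOn_Ioo_deriv_of_nonneg_of_tendsto hderiv hg' ha hb
  have ftc : ∫ x in a..b, g' x = lb - la :=
    intervalIntegral.integral_eq_sub_of_hasDerivAt_of_tendsto hab hderiv
      ((intervalIntegrable_iff_integrableOn_Ioo_of_le hab.le).2 integrable) ha hb
  rw [← ofReal_integral_eq_lintegral_ofReal integrable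
    (ae_restrict_of_forall_mem measurableSet_Ioo hg'), ← integral_Ioc_eq_integral_Ioo,
    ← intervalIntegral.integral_of_le hab.le, ftc]

end FundamentalTheorem

lemma setLIntegral_Ioo_inv_mul_logFac_rpow_le {α r : ℝ} (hα : 0 < α) (hr : 0 < r) :
    ∫⁻ t in Ioo 0 r, ENNReal.ofReal (t⁻¹ * logFac t ^ (-α - 1)) ≤
      ENNReal.ofReal ((Real.exp 1 * r + 1) / α * logFac r ^ (-α)) := by
  set g' : ℝ → ℝ := fun t ↦ α / (Real.exp 1 * t + 1) * (t⁻¹ * logFac t ^ (-α - 1)) with hg'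
  have g'_nonneg : ∀ t ∈ Ioo 0 r, 0 ≤ g' t := fun t ht ↦ by
    have := logFac_nonneg ht.1.le
    have := ht.1
    positivity
  have le_g' : ∀ t ∈ Ioo 0 r,
      t⁻¹ * logFac t ^ (-α - 1) ≤ (Real.exp 1 * r + 1) / α * g' t := fun t ⟨ht, htr⟩ ↦ by
    have := logFac_nonneg ht.le
    calc t⁻¹ * logFac t ^ (-α - 1)
        ≤ (Real.exp 1 * r + 1) / (Real.exp 1 * t + 1) * (t⁻¹ * logFac t ^ (-α - 1)) :=
          le_mul_of_one_le_left (by positivity) ((one_le_div (by positivity)).2 (by gcongr))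
      _ = (Real.exp 1 * r + 1) / α * g' t := by
          simp only [hg']
          field_simp
  have integral_g' : ∫⁻ t in Ioo 0 r, ENNReal.ofReal (g' t) = ENNReal.ofReal (logFac r ^ (-α)) := by
    rw [setLIntegral_Ioo_deriv_of_nonneg_of_tendsto hr
      (fun t ht ↦ hasDerivAt_logFac_rpow_neg α ht.1) g'_nonneg
      ((tendsto_rpow_neg_atTop hα).comp tendsto_logFac_nhdsGT_zero)
      ((hasDerivAt_logFac_rpow_neg α hr).continuousAt.mono_left nhdsWithin_le_nhds), sub_zero]
  calc ∫⁻ t in Ioo 0 r, ENNReal.ofReal (t⁻¹ * logFac t ^ (-α - 1))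
      ≤ ∫⁻ t in Ioo 0 r, ENNReal.ofReal ((Real.exp 1 * r + 1) / α) * ENNReal.ofReal (g' t) :=
        setLIntegral_mono' measurableSet_Ioo fun t ht ↦ by
          rw [← ENNReal.ofReal_mul (by positivity)]
          exact ENNReal.ofReal_le_ofReal (le_g' t ht)
    _ = ENNReal.ofReal ((Real.exp 1 * r + 1) / α * logFac r ^ (-α)) := by
        rw [lintegral_const_mul' _ _ ENNReal.ofReal_ne_top, integral_g',
          ENNReal.ofReal_mul (by positivity)]

section Polar

variable {E : Type*} [NormedAddCommGroup E] [NormedSpace ℝ E] [FiniteDimensional ℝ E]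
  [Nontrivial E] [MeasurableSpace E] [BorelSpace E] (μ : Measure E) [μ.IsAddHaarMeasure]

lemma lintegral_fun_norm_addHaar {f : ℝ → ℝ≥0∞} (hf : Measurable f) :
    ∫⁻ x, f ‖x‖ ∂μ = finrank ℝ E * μ (Metric.ball 0 1) *
      ∫⁻ t in Ioi (0 : ℝ), ENNReal.ofReal (t ^ (finrank ℝ E - 1)) * f t := by
  calc ∫⁻ x, f ‖x‖ ∂μ
      = ∫⁻ x : ({0}ᶜ : Set E), f ‖x.1‖ ∂(μ.comap (↑)) := by
        rw [lintegral_subtype_comap (measurableSet_singleton _).compl fun x ↦ f ‖x‖,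
          restrict_compl_singleton]
    _ = ∫⁻ x, f x.2 ∂μ.toSphere.prod (.volumeIoiPow (finrank ℝ E - 1)) := by
        simpa using μ.measurePreserving_homeomorphUnitSphereProd.lintegral_comp_emb
          (Homeomorph.measurableEmbedding _) (f ∘ Subtype.val ∘ Prod.snd)
    _ = μ.toSphere univ * ∫⁻ t : Ioi (0 : ℝ), f t ∂.volumeIoiPow (finrank ℝ E - 1) := by
        rw [lintegral_prod _ (by fun_prop)]
        simp only [lintegral_const, mul_comm]
    _ = _ := by
        rw [μ.toSphere_apply_univ, Measure.volumeIoiPow,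
          lintegral_withDensity_eq_lintegral_mul _ (by fun_prop) (by fun_prop),
          ← lintegral_subtype_comap measurableSet_Ioi]
        rfl

lemma setLIntegral_ball_fun_norm_addHaar {f : ℝ → ℝ≥0∞} (hf : Measurable f) (r : ℝ) :
    ∫⁻ x in Metric.ball 0 r, f ‖x‖ ∂μ = finrank ℝ E * μ (Metric.ball 0 1) *
      ∫⁻ t in Ioo 0 r, ENNReal.ofReal (t ^ (finrank ℝ E - 1)) * f t := by
  have indicator_ball (x : E) :
      (Metric.ball 0 r).indicator (fun x ↦ f ‖x‖) x = (Iio r).indicator f ‖x‖ := by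
    simp [indicator]
  rw [← lintegral_indicator measurableSet_ball, lintegral_congr indicator_ball,
    lintegral_fun_norm_addHaar μ (hf.indicator measurableSet_Iio), ← Ioi_inter_Iio,
    inter_comm, ← setLIntegral_indicator measurableSet_Iio]
  simp only [indicator_mul_right]

end Polar

section CriticalProfile

/-- The radial profile `t⁻ᵈ log(e + 1/t)^(-α - 1)` of the critical function `φ_c`, which in the
theorem is taken with `α = d / θ`. Its junk value at `t = 0` is irrelevant up to null sets. -/
noncomputable def criticalProfile (d : ℕ) (α t : ℝ) : ℝ :=
  t ^ (-(d : ℝ)) * logFac t ^ (-α - 1)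

lemma criticalProfile_nonneg (d : ℕ) (α : ℝ) {t : ℝ} (ht : 0 ≤ t) : 0 ≤ criticalProfile d α t := by
  have := logFac_nonneg ht
  unfold criticalProfile
  positivity

lemma measurable_criticalProfile (d : ℕ) (α : ℝ) : Measurable (criticalProfile d α) :=
  (measurable_id.pow_const _).mul (measurable_logFac.pow_const _)

lemma criticalProfile_le_rpow (d : ℕ) {α r t : ℝ} (hα : -1 ≤ α) (hr : 0 < r) (hrt : r ≤ t) :
    criticalProfile d α t ≤ r ^ (-(d : ℝ)) := by
  have ht : 0 < t := hr.trans_le hrt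
  have log_factor_le_one : logFac t ^ (-α - 1) ≤ 1 :=
    Real.rpow_le_one_of_one_le_of_nonpos (one_le_logFac ht) (by linarith)
  calc criticalProfile d α t ≤ t ^ (-(d : ℝ)) :=
        mul_le_of_le_one_right (by positivity) log_factor_le_one
    _ ≤ r ^ (-(d : ℝ)) := Real.rpow_le_rpow_of_nonpos hr hrt (by simp)

lemma pow_mul_criticalProfile {d : ℕ} (hd : d ≠ 0) (α : ℝ) {t : ℝ} (ht : 0 < t) :
    t ^ (d - 1) * criticalProfile d α t = t⁻¹ * logFac t ^ (-α - 1) := by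
  obtain ⟨m, rfl⟩ := Nat.exists_eq_succ_of_ne_zero hd
  rw [criticalProfile, Real.rpow_neg ht.le, Real.rpow_natCast, Nat.succ_sub_one, pow_succ]
  field_simp

lemma setLIntegral_criticalProfile_le_ball_add {E : Type*} [NormedAddCommGroup E]
    [MeasurableSpace E] [OpensMeasurableSpace E] (μ : Measure E) (d : ℕ) {α r : ℝ} (hα : -1 ≤ α)
    (hr : 0 < r) (A : Set E) :
    ∫⁻ x in A, ENNReal.ofReal (criticalProfile d α ‖x‖) ∂μ ≤
      ∫⁻ x in Metric.ball 0 r, ENNReal.ofReal (criticalProfile d α ‖x‖) ∂μ +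
        ENNReal.ofReal (r ^ (-(d : ℝ))) * μ A := by
  set φ : E → ℝ≥0∞ := fun x ↦ ENNReal.ofReal (criticalProfile d α ‖x‖)
  have pointwise (x : E) :
      φ x ≤ (Metric.ball 0 r).indicator φ x + ENNReal.ofReal (r ^ (-(d : ℝ))) := by
    by_cases hx : x ∈ Metric.ball 0 r
    · rw [indicator_of_mem hx]
      exact le_self_add
    · have : r ≤ ‖x‖ := by simpa using hx
      exact le_add_left (ENNReal.ofReal_le_ofReal (criticalProfile_le_rpow d hα hr this))
  calc ∫⁻ x in A, φ x ∂μ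
      ≤ ∫⁻ x in A, ((Metric.ball 0 r).indicator φ x + ENNReal.ofReal (r ^ (-(d : ℝ)))) ∂μ :=
        lintegral_mono pointwise
    _ = ∫⁻ x in A, (Metric.ball 0 r).indicator φ x ∂μ + ENNReal.ofReal (r ^ (-(d : ℝ))) * μ A := by
        rw [lintegral_add_right _ measurable_const, setLIntegral_const]
    _ ≤ ∫⁻ x in Metric.ball 0 r, φ x ∂μ + ENNReal.ofReal (r ^ (-(d : ℝ))) * μ A := by
        rw [← lintegral_indicator measurableSet_ball]
        gcongr
        exact Measure.restrict_le_self

variable {E : Type*} [NormedAddCommGroup E] [NormedSpace ℝ E] [FiniteDimensional ℝ E]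
  [Nontrivial E] [MeasurableSpace E] [BorelSpace E] (μ : Measure E) [μ.IsAddHaarMeasure]

lemma setLIntegral_ball_criticalProfile_le {α r : ℝ} (hα : 0 < α) (hr : 0 < r) :
    ∫⁻ x in Metric.ball 0 r, ENNReal.ofReal (criticalProfile (finrank ℝ E) α ‖x‖) ∂μ ≤
      finrank ℝ E * μ (Metric.ball 0 1) *
        ENNReal.ofReal ((Real.exp 1 * r + 1) / α * logFac r ^ (-α)) := by
  rw [setLIntegral_ball_fun_norm_addHaar μ (measurable_criticalProfile _ α).ennreal_ofReal]
  gcongr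
  refine le_of_eq_of_le (setLIntegral_congr_fun measurableSet_Ioo fun t ht ↦ ?_)
    (setLIntegral_Ioo_inv_mul_logFac_rpow_le hα hr)
  rw [← ENNReal.ofReal_mul (pow_nonneg ht.1.le _),
    pow_mul_criticalProfile finrank_pos.ne' α ht.1]

lemma logFac_rpow_mul_setLIntegral_criticalProfile_le {α r : ℝ} (hα : 0 < α) (hr : r ∈ Ioc 0 1)
    {M : ℝ≥0∞} {A : Set E} (hA : μ A ≤ M * ENNReal.ofReal (r ^ (2 * finrank ℝ E))) :
    ENNReal.ofReal (logFac r ^ α) *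
        ∫⁻ x in A, ENNReal.ofReal (criticalProfile (finrank ℝ E) α ‖x‖) ∂μ ≤
      finrank ℝ E * μ (Metric.ball 0 1) * ENNReal.ofReal ((Real.exp 1 + 1) / α) +
        M * ENNReal.ofReal (logFac r ^ α * r ^ (finrank ℝ E : ℝ)) := by
  obtain ⟨hr0, hr1⟩ := hr
  have hL : 0 < logFac r := logFac_pos hr0
  set d := finrank ℝ E
  set V := μ (Metric.ball (0 : E) 1)
  have near_origin : ENNReal.ofReal (logFac r ^ α) *
      ENNReal.ofReal ((Real.exp 1 * r + 1) / α * logFac r ^ (-α)) ≤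
        ENNReal.ofReal ((Real.exp 1 + 1) / α) := by
    rw [← ENNReal.ofReal_mul (by positivity), mul_left_comm, ← Real.rpow_add hL, add_neg_cancel,
      Real.rpow_zero, mul_one]
    gcongr
    exact mul_le_of_le_one_right (Real.exp_pos 1).le hr1
  have away_from_origin : ENNReal.ofReal (r ^ (-(d : ℝ))) * ENNReal.ofReal (r ^ (2 * d)) =
      ENNReal.ofReal (r ^ (d : ℝ)) := by
    rw [← ENNReal.ofReal_mul (by positivity), ← Real.rpow_natCast, ← Real.rpow_add hr0]
    congr 2
    push_cast
    ring
  calc ENNReal.ofReal (logFac r ^ α) * ∫⁻ x in A, ENNReal.ofReal (criticalProfile d α ‖x‖) ∂μ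
      ≤ ENNReal.ofReal (logFac r ^ α) *
          (d * V * ENNReal.ofReal ((Real.exp 1 * r + 1) / α * logFac r ^ (-α)) +
            ENNReal.ofReal (r ^ (-(d : ℝ))) * (M * ENNReal.ofReal (r ^ (2 * d)))) := by
        gcongr
        refine (setLIntegral_criticalProfile_le_ball_add μ d (by linarith) hr0 A).trans ?_
        gcongr
        exact setLIntegral_ball_criticalProfile_le μ hα hr0
    _ = d * V * (ENNReal.ofReal (logFac r ^ α) *
            ENNReal.ofReal ((Real.exp 1 * r + 1) / α * logFac r ^ (-α))) +
          M * (ENNReal.ofReal (logFac r ^ α) * ENNReal.ofReal (r ^ (d : ℝ))) := by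
        rw [← away_from_origin]
        ring
    _ ≤ d * V * ENNReal.ofReal ((Real.exp 1 + 1) / α) +
          M * ENNReal.ofReal (logFac r ^ α * r ^ (d : ℝ)) := by
        rw [ENNReal.ofReal_mul (p := logFac r ^ α) (q := r ^ (d : ℝ)) (by positivity)]
        gcongr

lemma exists_logFac_rpow_mul_setLIntegral_criticalProfile_le_of_le_one {α : ℝ} (hα : 0 < α)
    {M : ℝ≥0∞} (hM : M ≠ ⊤) :
    ∃ K : ℝ≥0∞, K < ⊤ ∧ ∀ s ∈ Ioc (0 : ℝ) 1, ∀ A : Set E, μ A ≤ M * ENNReal.ofReal s →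
      ENNReal.ofReal (logFac s ^ α) *
        ∫⁻ x in A, ENNReal.ofReal (criticalProfile (finrank ℝ E) α ‖x‖) ∂μ ≤ K := by
  have hd : 0 < finrank ℝ E := finrank_pos
  set d := finrank ℝ E
  obtain ⟨C, hC⟩ := exists_logFac_rpow_mul_rpow_le hα (Nat.cast_pos (α := ℝ).2 hd)
  refine ⟨ENNReal.ofReal ((2 * d : ℕ) ^ α) * (d * μ (Metric.ball 0 1) *
    ENNReal.ofReal ((Real.exp 1 + 1) / α) + M * ENNReal.ofReal C), ?_, fun s ⟨hs0, hs1⟩ A hA ↦ ?_⟩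
  · have : μ (Metric.ball (0 : E) 1) < ⊤ := measure_ball_lt_top
    finiteness
  obtain ⟨r, hr, rfl⟩ : ∃ r ∈ Ioc (0 : ℝ) 1, r ^ (2 * d) = s :=
    ⟨s ^ ((2 * d : ℕ) : ℝ)⁻¹, ⟨by positivity, Real.rpow_le_one hs0.le hs1 (by positivity)⟩,
      Real.rpow_inv_natCast_pow hs0.le (by omega)⟩
  have logFac_le : logFac (r ^ (2 * d)) ^ α ≤ (2 * d : ℕ) ^ α * logFac r ^ α := by
    rw [← Real.mul_rpow (by positivity) (logFac_nonneg hr.1.le)]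
    exact Real.rpow_le_rpow (logFac_nonneg hs0.le) (logFac_pow_le hr.1 (by omega)) hα.le
  calc ENNReal.ofReal (logFac (r ^ (2 * d)) ^ α) *
        ∫⁻ x in A, ENNReal.ofReal (criticalProfile d α ‖x‖) ∂μ
      ≤ ENNReal.ofReal ((2 * d : ℕ) ^ α) * (ENNReal.ofReal (logFac r ^ α) *
          ∫⁻ x in A, ENNReal.ofReal (criticalProfile d α ‖x‖) ∂μ) := by
        rw [← mul_assoc, ← ENNReal.ofReal_mul (by positivity)]
        gcongr
    _ ≤ _ := by
        gcongr
        refine (logFac_rpow_mul_setLIntegral_criticalProfile_le μ hα hr hA).trans ?_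
        gcongr
        exact hC r hr

lemma exists_logFac_rpow_mul_setLIntegral_criticalProfile_le {α : ℝ} (hα : 0 < α)
    {W : ℝ≥0∞} (hW : W ≠ ⊤) :
    ∃ K : ℝ≥0∞, K < ⊤ ∧ ∀ s : ℝ, 0 < s → ∀ A : Set E, μ A ≤ ENNReal.ofReal s → μ A ≤ W →
      ENNReal.ofReal (logFac s) ^ α *
        ∫⁻ x in A, ENNReal.ofReal (criticalProfile (finrank ℝ E) α ‖x‖) ∂μ ≤ K := by
  obtain ⟨K, hK, bound⟩ := exists_logFac_rpow_mul_setLIntegral_criticalProfile_le_of_le_one μ hα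
    (M := max 1 W) (by finiteness)
  refine ⟨K, hK, fun s hs A hAs hAW ↦ ?_⟩
  rw [ENNReal.ofReal_rpow_of_pos (logFac_pos hs)]
  rcases le_total s 1 with hs1 | hs1
  · exact bound s ⟨hs, hs1⟩ A (hAs.trans (le_mul_of_one_le_left' (le_max_left _ _)))
  · calc _ ≤ ENNReal.ofReal (logFac 1 ^ α) *
          ∫⁻ x in A, ENNReal.ofReal (criticalProfile (finrank ℝ E) α ‖x‖) ∂μ := by
          have := logFac_nonneg hs.le
          have := antitoneOn_logFac (mem_Ioi.2 one_pos) hs hs1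
          gcongr
      _ ≤ K := bound 1 ⟨one_pos, le_rfl⟩ A (by simpa using Or.inr hAW)

end CriticalProfile

lemma zygNorm_one_indicator_le {n : ℕ} {α : ℝ} {f : EuclideanSpace ℝ (Fin n) → ℝ}
    {B : Set (EuclideanSpace ℝ (Fin n))} (hB : MeasurableSet B) {K : ℝ≥0∞}
    (hK : ∀ s : ℝ, 0 < s → ∀ A, volume A ≤ ENNReal.ofReal s → volume A ≤ volume B →
      ENNReal.ofReal (logFac s) ^ α * ∫⁻ x in A, ENNReal.ofReal |f x| ≤ K) :
    zygNorm n 1 α (B.indicator f) ≤ K := by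
  have abs_indicator (x) :
      ENNReal.ofReal |B.indicator f x| = B.indicator (fun x ↦ ENNReal.ofReal |f x|) x := by
    by_cases hx : x ∈ B <;> simp [hx]
  simp only [zygNorm, div_one, ENNReal.rpow_one, Real.rpow_one, ENNReal.mul_iSup, iSup_le_iff,
    abs_indicator, setLIntegral_indicator hB]
  rintro ⟨s, hs⟩ ⟨A, -, hAs⟩
  exact hK s hs (B ∩ A) (hAs ▸ measure_mono inter_subset_right) (measure_mono inter_subset_left)

theorem stmt19_general {n : ℕ} (hn : 1 ≤ n) {α : ℝ} (hα : 0 < α) (ρ : ℝ) :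
    zygNormUL n 1 α ρ
      (fun x : EuclideanSpace ℝ (Fin n) ↦ ‖x‖ ^ (-(n : ℝ)) * logFac ‖x‖ ^ (-α - 1)) < ⊤ := by
  have : Nonempty (Fin n) := ⟨⟨0, hn⟩⟩
  obtain ⟨K, hK, bound⟩ := exists_logFac_rpow_mul_setLIntegral_criticalProfile_le
    (volume : Measure (EuclideanSpace ℝ (Fin n))) hα
    (W := volume (Metric.ball (0 : EuclideanSpace ℝ (Fin n)) ρ)) measure_ball_lt_top.ne
  rw [finrank_euclideanSpace_fin] at bound
  refine (iSup_le fun z ↦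
    zygNorm_one_indicator_le measurableSet_ball fun s hs A hAs hAB ↦ ?_).trans_lt hK
  rw [Measure.addHaar_ball_center] at hAB
  change ENNReal.ofReal (logFac s) ^ α *
    ∫⁻ x in A, ENNReal.ofReal |criticalProfile n α ‖x‖| ≤ K
  simpa only [abs_of_nonneg (criticalProfile_nonneg n α (norm_nonneg _))] using
    bound s hs A hAs hAB

theorem stmt19 (n : ℕ) (hn : 1 ≤ n) (θ : ℝ) (hθ0 : 0 < θ) (hθ2 : θ ≤ 2) :
    zygNormUL n 1 ((n : ℝ) / θ) 1
      (fun x : EuclideanSpace ℝ (Fin n) =>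
        ‖x‖ ^ (-(n : ℝ)) * logFac ‖x‖ ^ (-(n : ℝ) / θ - 1)) < ⊤ := by
  simpa only [neg_div] using stmt19_general hn (div_pos (Nat.cast_pos.2 hn) hθ0) 1
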